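/- Let M be an n×n complex matrix with n pairwise distinct eigenvalues, and let S* be an invertible matrix and D* a diagonal matrix with M = S* D* S*⁻¹. Define the diagonal matrix K by K_{jj} = ∑_{k=1}^n |(S*⁻¹)_{jk}|. Then for every invertible matrix S and diagonal matrix D with M = S D S⁻¹, one has ‖S‖∞ · ‖S⁻¹‖∞ ≥ ‖S* K‖∞. (Lower-bound direction of the minimal-condition-number lemma.) -/

import Mathlib

open Matrix

/-- The matrix norm induced by the vector `∞`-norm: the maximum absolute row sum. -/
noncomputable def mNorm {ι κ : Type*} [Fintype ι] [Fintype κ] (M : Matrix ι κ ℂ) : ℝ :=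
  ⨆ i, ∑ j, ‖M i j‖

/-!
Write `|A|` for the matrix of absolute values. The row sums of `S* K` are those of `|S*| |S*⁻¹|`,
whereas `‖S‖ ‖S⁻¹‖` dominates `‖|S| |S⁻¹|‖`, so it is enough that `|S*| |S*⁻¹| ≤ |S| |S⁻¹|`
entrywise. The matrix `Q = S⁻¹ S*` satisfies `D Q = Q D*`; as the entries of `D*` are distinct, each
row of `Q` has at most one nonzero entry, so no cancellation occurs in `Q Q⁻¹ = 1` and therefore
`|Q| |Q⁻¹| = 1`. Since `S* = S Q` and `S*⁻¹ = Q⁻¹ S⁻¹`, the entrywise bound follows from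
`|S*| |S*⁻¹| ≤ |S| |Q| |Q⁻¹| |S⁻¹|`.
-/

section LinftyOpNorm

open scoped Matrix.Norms.Operator

variable {l m n p α β : Type*} [Fintype l] [Fintype m] [Fintype n] [Fintype p]

lemma mNorm_eq_linfty_opNorm (A : Matrix m n ℂ) : mNorm A = ‖A‖ := by
  rw [linfty_opNorm_def, Finset.sup_univ_eq_ciSup, NNReal.coe_iSup]
  simp only [mNorm, NNReal.coe_sum, coe_nnnorm]

lemma linfty_opNorm_le_of_row_sum_le [SeminormedAddCommGroup α] [SeminormedAddCommGroup β]
    {A : Matrix m n α} {B : Matrix m p β} (h : ∀ i, ∑ j, ‖A i j‖ ≤ ∑ j, ‖B i j‖) :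
    ‖A‖ ≤ ‖B‖ := by
  rw [linfty_opNorm_def, linfty_opNorm_def, NNReal.coe_le_coe]
  exact Finset.sup_mono_fun fun i _ => by
    simpa only [← NNReal.coe_le_coe, NNReal.coe_sum, coe_nnnorm] using h i

lemma linfty_opNorm_map_norm [SeminormedAddCommGroup α] (A : Matrix m n α) :
    ‖A.map norm‖ = ‖A‖ := by
  simp only [linfty_opNorm_def, map_apply, nnnorm_norm]

lemma linfty_opNorm_map_norm_mul_map_norm_le [SeminormedAddCommGroup α]
    [SeminormedAddCommGroup β] (A : Matrix l m α) (B : Matrix m n β) :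
    ‖A.map norm * B.map norm‖ ≤ ‖A‖ * ‖B‖ := by
  simpa only [linfty_opNorm_map_norm] using linfty_opNorm_mul (A.map norm) (B.map norm)

end LinftyOpNorm

section Entrywise

variable {l m n R E : Type*} [Fintype m]

lemma mul_apply_le_mul_apply [Semiring R] [PartialOrder R] [IsOrderedRing R]
    {A A' : Matrix l m R} {B B' : Matrix m n R} (hA : ∀ i j, A i j ≤ A' i j)
    (hB : ∀ j k, B j k ≤ B' j k) (hA' : ∀ i j, 0 ≤ A' i j) (hB₀ : ∀ j k, 0 ≤ B j k)
    (i : l) (k : n) : (A * B) i k ≤ (A' * B') i k :=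
  Finset.sum_le_sum fun j _ => mul_le_mul (hA i j) (hB j k) (hB₀ j k) (hA' i j)

lemma map_norm_mul_map_norm_apply_nonneg [SeminormedAddCommGroup R]
    [SeminormedAddCommGroup E] (A : Matrix l m R) (B : Matrix m n E) (i : l) (k : n) :
    0 ≤ (A.map norm * B.map norm) i k := by
  simp only [mul_apply, map_apply]
  positivity

lemma norm_mul_apply_le [NonUnitalSeminormedRing R] (A : Matrix l m R) (B : Matrix m n R)
    (i : l) (k : n) : ‖(A * B) i k‖ ≤ (A.map norm * B.map norm) i k :=
  norm_sum_le_of_le _ fun _ _ => norm_mul_le _ _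

lemma norm_mul_apply_eq_of_subsingleton_support [NonUnitalSeminormedRing R] [NormMulClass R]
    {A : Matrix l m R} {i : l} (hA : (Function.support (A i)).Subsingleton) (B : Matrix m n R)
    (k : n) : ‖(A * B) i k‖ = (A.map norm * B.map norm) i k := by
  simp only [mul_apply, map_apply]
  rcases hA.eq_empty_or_singleton with hzero | ⟨j₀, hj₀⟩
  · simp [Function.support_eq_empty_iff.mp hzero]
  · have hne : ∀ j, j ≠ j₀ → A i j = 0 := fun j hj =>
      Function.notMem_support.mp (hj₀ ▸ hj)
    rw [Fintype.sum_eq_single j₀ fun j hj => by rw [hne j hj, zero_mul],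
      Fintype.sum_eq_single j₀ fun j hj => by rw [hne j hj, norm_zero, zero_mul], norm_mul]

lemma sum_norm_mul_diagonal_apply [NonUnitalSeminormedRing R] [NormMulClass R] [DecidableEq m]
    [SeminormedAddCommGroup E] [Fintype n] (A : Matrix l m R) {B : Matrix m n E} {κ : m → R}
    (hκ : ∀ j, ‖κ j‖ = ∑ k, ‖B j k‖) (i : l) :
    ∑ j, ‖(A * diagonal κ) i j‖ = ∑ k, (A.map norm * B.map norm) i k := by
  simp only [mul_diagonal, norm_mul, hκ, Finset.mul_sum]
  exact Finset.sum_comm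

end Entrywise

section Intertwining

variable {m n R : Type*} [Fintype m] [Fintype n] [DecidableEq m] [DecidableEq n]

lemma diagonal_mul_inv_mul_eq_of_conj_eq [CommRing R] {S T : Matrix n n R} {d e : n → R}
    (hS : IsUnit S) (hT : IsUnit T) (h : S * diagonal d * S⁻¹ = T * diagonal e * T⁻¹) :
    diagonal d * (S⁻¹ * T) = S⁻¹ * T * diagonal e := by
  rw [isUnit_iff_isUnit_det] at hS hT
  calc diagonal d * (S⁻¹ * T) = S⁻¹ * (S * diagonal d * S⁻¹) * T := by
        simp only [Matrix.mul_assoc, nonsing_inv_mul_cancel_left _ _ hS]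
    _ = S⁻¹ * T * diagonal e := by
        simp only [h, Matrix.mul_assoc, nonsing_inv_mul _ hT, Matrix.mul_one]

lemma subsingleton_support_of_diagonal_mul_eq [CommSemiring R] [IsLeftCancelMulZero R]
    {d : m → R} {e : n → R} {Q : Matrix m n R} (he : Function.Injective e)
    (h : diagonal d * Q = Q * diagonal e) (i : m) :
    (Function.support (Q i)).Subsingleton := by
  have eigenvalue_eq : ∀ j, Q i j ≠ 0 → e j = d i := fun j hj => by
    have hij : d i * Q i j = Q i j * e j := by
      simpa only [diagonal_mul, mul_diagonal] using congr_fun₂ h i j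
    exact mul_left_cancel₀ hj (hij.symm.trans (mul_comm _ _))
  exact fun j hj k hk => he ((eigenvalue_eq j hj).trans (eigenvalue_eq k hk).symm)

lemma map_norm_mul_map_norm_eq_one [NormedField R] {d : m → R} {e : n → R}
    {Q : Matrix m n R} {P : Matrix n m R} (he : Function.Injective e)
    (h : diagonal d * Q = Q * diagonal e) (hQP : Q * P = 1) :
    Q.map norm * P.map norm = 1 := by
  ext i k
  rw [← norm_mul_apply_eq_of_subsingleton_support
    (subsingleton_support_of_diagonal_mul_eq he h i), hQP, one_apply, one_apply]
  split_ifs <;> simp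

end Intertwining

section Diagonalization

open scoped Matrix.Norms.Operator

variable {n 𝕜 : Type*} [Fintype n] [DecidableEq n] [NormedField 𝕜]

theorem map_norm_mul_map_norm_inv_apply_le {S T : Matrix n n 𝕜} {d e : n → 𝕜} (hS : IsUnit S)
    (hT : IsUnit T) (he : Function.Injective e)
    (h : S * diagonal d * S⁻¹ = T * diagonal e * T⁻¹) (i k : n) :
    (T.map norm * T⁻¹.map norm) i k ≤ (S.map norm * S⁻¹.map norm) i k := by
  have hSdet := (isUnit_iff_isUnit_det _).mp hS
  have hTdet := (isUnit_iff_isUnit_det _).mp hT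
  set Q := S⁻¹ * T with hQ
  set P := T⁻¹ * S with hP
  have hT_eq : S * Q = T := mul_nonsing_inv_cancel_left _ _ hSdet
  have hTinv_eq : P * S⁻¹ = T⁻¹ := mul_nonsing_inv_cancel_right _ _ hSdet
  have hQP : Q * P = 1 := by
    rw [hQ, hP, Matrix.mul_assoc, mul_nonsing_inv_cancel_left _ _ hTdet, nonsing_inv_mul _ hSdet]
  have habs : Q.map norm * P.map norm = 1 :=
    map_norm_mul_map_norm_eq_one he (diagonal_mul_inv_mul_eq_of_conj_eq hS hT h) hQP
  calc (T.map norm * T⁻¹.map norm) i k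
      = ((S * Q).map norm * (P * S⁻¹).map norm) i k := by rw [hT_eq, hTinv_eq]
    _ ≤ ((S.map norm * Q.map norm) * (P.map norm * S⁻¹.map norm)) i k :=
        mul_apply_le_mul_apply (norm_mul_apply_le S Q) (norm_mul_apply_le P S⁻¹)
          (map_norm_mul_map_norm_apply_nonneg S Q) (fun _ _ => norm_nonneg _) i k
    _ = (S.map norm * (Q.map norm * P.map norm) * S⁻¹.map norm) i k := by
        simp only [Matrix.mul_assoc]
    _ = (S.map norm * S⁻¹.map norm) i k := by rw [habs, Matrix.mul_one]

theorem min_condition_number_lower_bound_general {S D Sstar Dstar : Matrix n n 𝕜} {κ : n → 𝕜}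
    (hS : IsUnit S) (hD : D.IsDiag) (hSstar : IsUnit Sstar) (hDstar : Dstar.IsDiag)
    (hdist : Function.Injective Dstar.diag) (hκ : ∀ j, ‖κ j‖ = ∑ k, ‖Sstar⁻¹ j k‖)
    (h : S * D * S⁻¹ = Sstar * Dstar * Sstar⁻¹) :
    ‖Sstar * diagonal κ‖ ≤ ‖S‖ * ‖S⁻¹‖ := by
  rw [← hD.diagonal_diag, ← hDstar.diagonal_diag] at h
  refine (linfty_opNorm_le_of_row_sum_le fun i => ?_).trans
    (linfty_opNorm_map_norm_mul_map_norm_le S S⁻¹)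
  calc ∑ j, ‖(Sstar * diagonal κ) i j‖
      = ∑ k, (Sstar.map norm * Sstar⁻¹.map norm) i k := sum_norm_mul_diagonal_apply Sstar hκ i
    _ ≤ ∑ k, (S.map norm * S⁻¹.map norm) i k :=
        Finset.sum_le_sum fun k _ => map_norm_mul_map_norm_inv_apply_le hS hSstar hdist h i k
    _ ≤ ∑ k, ‖(S.map norm * S⁻¹.map norm) i k‖ :=
        Finset.sum_le_sum fun k _ => Real.le_norm_self _

end Diagonalization

/-- Lemma 1, lower-bound direction: if `M = S* D* S*⁻¹` has `n` pairwise distinct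
eigenvalues (the diagonal entries of `D*`), and `K` is the diagonal matrix with
`K_jj = ∑_k |(S*⁻¹)_jk|`, then every diagonalizing matrix `S` of `M` satisfies
`‖S‖_∞ ‖S⁻¹‖_∞ ≥ ‖S* K‖_∞`. -/
theorem min_condition_number_lower_bound
    {n : ℕ} (M Sstar Dstar : Matrix (Fin n) (Fin n) ℂ)
    (hSstar : IsUnit Sstar) (hDstar : Dstar.IsDiag)
    (hM : M = Sstar * Dstar * Sstar⁻¹)
    (hdist : Function.Injective fun i => Dstar i i)
    (K : Matrix (Fin n) (Fin n) ℂ)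
    (hK : K = Matrix.diagonal fun j => ((∑ k, ‖Sstar⁻¹ j k‖ : ℝ) : ℂ))
    (S D : Matrix (Fin n) (Fin n) ℂ) (hS : IsUnit S) (hD : D.IsDiag)
    (hM' : M = S * D * S⁻¹) :
    mNorm (Sstar * K) ≤ mNorm S * mNorm S⁻¹ := by
  simpa only [mNorm_eq_linfty_opNorm, hK] using
    min_condition_number_lower_bound_general hS hD hSstar hDstar hdist
      (fun j => Complex.norm_of_nonneg (by positivity)) (hM'.symm.trans hM)
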